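/- arXiv:0802.4186 — 2 statements merged into one kernel-verified Lean document; each statement's English description precedes it below -/
import Mathlib

section
/- Let K ⊆ L be a commutative field extension in which every element of L that is algebraic over K is separable over K. Then for all nonzero finite-dimensional K-subspaces A, B of L with dim_K A = r and dim_K B = s, there exists a finite-dimensional intermediate field K ⊆ H ⊆ L such that, with h = [H:K], one has dim_K⟨AB⟩ ≥ (⌈r/h⌉ + ⌈s/h⌉ − 1)·h. -/
/-!
Let `H` be the stabilizer of `A * B`. Replacing `K`, `A` and `B` by `H`, `HA` and `HB` turns the
bound into `dim A + dim B ≤ dim C + 1` for a product `C = A * B` with stabilizer `K`; the ceilings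
come from `dim_K A ≤ h * dim_H HA`.

Suppose `(A, B)` violates this. Among all pairs with product in `C`, one of maximal total dimension
can be taken, by e-transforms, to be `(H, Z)` with `H` a field stabilizing `Z`; violation forces
`H ≠ K`. If `A` is the largest left member for `B`, then uncrossing a translate of `(A, B)` with
`(H, Z)` produces two pairs, one of which is bounded by maximality, so that the other one violates
the bound again, with left member inside `H` and right member properly containing `Z`. By induction
a single field `J ≠ K` inside `H` stabilizes the left members of all of these, and hence those of
all violating pairs with largest left member. Then `J` stabilizes `C`, a contradiction.
-/

open Module Submodule
open scoped Pointwise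

namespace LinearKneser

variable {K L : Type*} [Field K] [Field L] [Algebra K L]

section Subspaces

variable {a b : L} {A B C X Y : Submodule K L}

instance (a : L) (X : Submodule K L) [FiniteDimensional K X] : FiniteDimensional K ↥(a • X) :=
  Module.Finite.map X _

theorem finrank_smul (ha : a ≠ 0) (X : Submodule K L) : finrank K ↥(a • X) = finrank K X :=
  (X.equivMapOfInjective _ (smul_right_injective L ha)).symm.finrank_eq

theorem mem_inv_smul_iff (ha : a ≠ 0) {x : L} : x ∈ a⁻¹ • X ↔ a * x ∈ X :=
  Set.mem_inv_smul_set_iff₀ ha (X : Set L) x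

theorem smul_le_iff : a • X ≤ Y ↔ ∀ x ∈ X, a * x ∈ Y :=
  map_le_iff_le_comap

theorem smul_le_mul (ha : a ∈ A) : a • B ≤ A * B :=
  smul_le_iff.2 fun _ hb => mul_mem_mul ha hb

theorem inv_smul_mul_smul_le (ha : a ≠ 0) (A B : Submodule K L) : a⁻¹ • A * a • B ≤ A * B := by
  refine mul_le.2 fun x hx y hy => ?_
  obtain ⟨z, hz, rfl⟩ := (mem_smul_pointwise_iff_exists y a B).1 hy
  rw [smul_eq_mul, ← mul_assoc, mul_comm x]
  exact mul_mem_mul ((mem_inv_smul_iff ha).1 hx) hz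

theorem finiteDimensional_right_of_mul_le [FiniteDimensional K C] (h : A * B ≤ C) (hA : A ≠ ⊥) :
    FiniteDimensional K B := by
  obtain ⟨a, ha, ha0⟩ := exists_mem_ne_zero_of_ne_bot hA
  have : FiniteDimensional K ↥(a • B) := finiteDimensional_of_le ((smul_le_mul ha).trans h)
  rw [← inv_smul_smul₀ ha0 B]
  infer_instance

theorem finiteDimensional_left_of_mul_le [FiniteDimensional K C] (h : A * B ≤ C) (hB : B ≠ ⊥) :
    FiniteDimensional K A :=
  finiteDimensional_right_of_mul_le (Submodule.mul_comm A B ▸ h) hB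

theorem finrank_right_le_of_mul_le [FiniteDimensional K C] (h : A * B ≤ C) (hA : A ≠ ⊥) :
    finrank K B ≤ finrank K C := by
  obtain ⟨a, ha, ha0⟩ := exists_mem_ne_zero_of_ne_bot hA
  rw [← finrank_smul ha0 B]
  exact finrank_mono ((smul_le_mul ha).trans h)

theorem finrank_left_le_of_mul_le [FiniteDimensional K C] (h : A * B ≤ C) (hB : B ≠ ⊥) :
    finrank K A ≤ finrank K C :=
  finrank_right_le_of_mul_le (Submodule.mul_comm A B ▸ h) hB

theorem inf_mul_sup_le (hAB : A * B ≤ C) (hXY : X * Y ≤ C) : (A ⊓ X) * (B ⊔ Y) ≤ C := by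
  rw [Submodule.mul_sup]
  exact sup_le ((mul_le_mul_left inf_le_left _).trans hAB)
    ((mul_le_mul_left inf_le_right _).trans hXY)

theorem inf_inv_smul_mul_sup_smul_le (hb : b ≠ 0) (hAB : A * B ≤ C) (hXY : X * Y ≤ C) :
    (A ⊓ b⁻¹ • Y) * (B ⊔ b • X) ≤ C :=
  inf_mul_sup_le hAB <|
    (inv_smul_mul_smul_le hb Y X).trans (Submodule.mul_comm X Y ▸ hXY)

theorem finrank_inf_inv_smul_add_finrank_sup_smul [FiniteDimensional K A] [FiniteDimensional K Y]
    (hb : b ≠ 0) :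
    finrank K ↥(A ⊓ b⁻¹ • Y) + finrank K ↥(Y ⊔ b • A) = finrank K A + finrank K Y := by
  have hsup : Y ⊔ b • A = b • (A ⊔ b⁻¹ • Y) := by
    rw [smul_sup', smul_inv_smul₀ hb, sup_comm]
  rw [hsup, finrank_smul hb, add_comm, finrank_sup_add_finrank_inf_eq,
    finrank_smul (inv_ne_zero hb)]

end Subspaces

/-- The stabilizer `{u | u * Z ⊆ Z}` of a finite-dimensional subspace `Z` of `L`, as an
intermediate field; its underlying set is that of `Z / Z`. -/
def mulStabilizer (Z : Submodule K L) [FiniteDimensional K Z] : IntermediateField K L where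
  carrier := ((Z / Z : Submodule K L) : Set L)
  mul_mem' {a b} ha hb := fun z hz => by
    rw [mul_assoc]
    exact ha _ (hb z hz)
  add_mem' := (Z / Z).add_mem
  algebraMap_mem' r := fun z hz => Algebra.smul_def r z ▸ Z.smul_mem r hz
  inv_mem' u hu := by
    rcases eq_or_ne u 0 with rfl | hu0
    · simp
    have hfix : u • Z = Z := eq_of_le_of_finrank_eq (smul_le_iff.2 hu) (finrank_smul hu0 Z)
    have hfix_inv : u⁻¹ • Z = Z := by
      conv_lhs => rw [← hfix]
      exact inv_smul_smul₀ hu0 Z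
    exact smul_le_iff.1 hfix_inv.le

theorem mem_mulStabilizer {Z : Submodule K L} [FiniteDimensional K Z] {u : L} :
    u ∈ mulStabilizer Z ↔ ∀ z ∈ Z, u * z ∈ Z :=
  Iff.rfl

section Pairs

local instance : CoeTail (IntermediateField K L) (Submodule K L) :=
  ⟨fun M => Subalgebra.toSubmodule M.toSubalgebra⟩

variable {A B C Z Z₀ : Submodule K L} {M H J : IntermediateField K L}

theorem mulStabilizer_mul_le (Z : Submodule K L) [FiniteDimensional K Z] :
    mulStabilizer Z * Z ≤ Z :=
  mul_le.2 fun _ hu => hu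

theorem finiteDimensional_mulStabilizer (Z : Submodule K L) [FiniteDimensional K Z] (hZ : Z ≠ ⊥) :
    FiniteDimensional K (mulStabilizer Z) :=
  finiteDimensional_left_of_mul_le (mulStabilizer_mul_le Z) hZ

theorem finrank_add_finrank_le_of_mul_le [FiniteDimensional K Z] (hHZ : H * Z ≤ Z)
    (hHZ₀ : H * Z₀ ≤ Z₀) (hle : Z₀ ≤ Z) (hnle : ¬ Z ≤ Z₀) :
    finrank K (H : Submodule K L) + finrank K Z₀ ≤ finrank K Z := by
  obtain ⟨w, hwZ, hwZ₀⟩ := SetLike.not_le_iff_exists.1 hnle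
  have hw0 : w ≠ 0 := fun h => hwZ₀ (h ▸ Z₀.zero_mem)
  have hwH : w • (H : Submodule K L) ≤ Z := by
    rw [Submodule.mul_comm] at hHZ
    exact (smul_le_mul hwZ).trans hHZ
  have hdisj : w • (H : Submodule K L) ⊓ Z₀ = ⊥ := by
    refine (Submodule.eq_bot_iff _).2 fun y ⟨hy, hyZ₀⟩ => ?_
    obtain ⟨x, hx, rfl⟩ := (mem_smul_pointwise_iff_exists y w _).1 hy
    by_contra hne
    have hx0 : x ≠ 0 := right_ne_zero_of_mul hne
    refine hwZ₀ ?_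
    simpa [hx0, mul_comm w] using hHZ₀ (mul_mem_mul (H.inv_mem hx) hyZ₀)
  have := finiteDimensional_of_le hwH
  have := finiteDimensional_of_le hle
  rw [← finrank_smul hw0 (H : Submodule K L), ← finrank_sup_add_finrank_inf_eq, hdisj,
    finrank_bot, add_zero]
  exact finrank_mono (sup_le hwH hle)

/-- The pairs of subspaces occurring in the argument for a fixed target space `C`: the product lies
in `C`, the left member is a nonzero subspace of the field `M`, and the right member properly
contains `Z₀`. The induction shrinks `M` and enlarges `Z₀`, starting from `M = L` and `Z₀ = 0`. -/
structure AdmissiblePair (C : Submodule K L) (M : IntermediateField K L)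
    (Z₀ A B : Submodule K L) : Prop where
  left_le : A ≤ M
  le_right : Z₀ ≤ B
  left_ne_bot : A ≠ ⊥
  not_right_le : ¬ B ≤ Z₀
  mul_le : A * B ≤ C

namespace AdmissiblePair

theorem right_ne_bot (h : AdmissiblePair C M Z₀ A B) : B ≠ ⊥ :=
  fun hB => h.not_right_le (hB ▸ bot_le)

theorem finiteDimensional_left [FiniteDimensional K C] (h : AdmissiblePair C M Z₀ A B) :
    FiniteDimensional K A :=
  finiteDimensional_left_of_mul_le h.mul_le h.right_ne_bot

theorem finiteDimensional_right [FiniteDimensional K C] (h : AdmissiblePair C M Z₀ A B) :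
    FiniteDimensional K B :=
  finiteDimensional_right_of_mul_le h.mul_le h.left_ne_bot

theorem smul (h : AdmissiblePair C M Z₀ A B) (hM : M * Z₀ ≤ Z₀) {a : L} (ha : a ∈ M)
    (ha0 : a ≠ 0) : AdmissiblePair C M Z₀ (a⁻¹ • A) (a • B) where
  left_le := smul_le_iff.2 fun x hx => M.mul_mem (M.inv_mem ha) (h.left_le hx)
  le_right := by
    have hinv : a⁻¹ • Z₀ ≤ B := (smul_le_mul (M.inv_mem ha)).trans (hM.trans h.le_right)
    simpa only [smul_inv_smul₀ ha0] using smul_mono_right a hinv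
  left_ne_bot hbot := h.left_ne_bot <| by
    rw [← smul_inv_smul₀ ha0 A, hbot, smul_bot']
  not_right_le hle := h.not_right_le fun b hb => by
    have hab : a * b ∈ Z₀ := smul_le_iff.1 hle b hb
    simpa only [inv_mul_cancel_left₀ ha0] using hM (mul_mem_mul (M.inv_mem ha) hab)
  mul_le := (inv_smul_mul_smul_le ha0 A B).trans h.mul_le

theorem exists_lexMaximal [FiniteDimensional K C] (h : AdmissiblePair C M Z₀ A B) :
    ∃ X Y, AdmissiblePair C M Z₀ X Y ∧ ∀ X' Y', AdmissiblePair C M Z₀ X' Y' →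
      finrank K X' + finrank K Y' < finrank K X + finrank K Y ∨
      finrank K X' + finrank K Y' = finrank K X + finrank K Y ∧ finrank K Y' ≤ finrank K Y := by
  let pairs : Set (Submodule K L × Submodule K L) := {p | AdmissiblePair C M Z₀ p.1 p.2}
  let size : Submodule K L × Submodule K L → ℕ ×ₗ ℕ := fun p =>
    toLex (finrank K p.1 + finrank K p.2, finrank K p.2)
  have hfin : (size '' pairs).Finite := by
    refine ((Set.finite_Iic (finrank K C + finrank K C)).prod
      (Set.finite_Iic (finrank K C))).subset ?_
    rintro _ ⟨p, hp, rfl⟩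
    have hright := finrank_right_le_of_mul_le hp.mul_le hp.left_ne_bot
    exact ⟨add_le_add (finrank_left_le_of_mul_le hp.mul_le hp.right_ne_bot) hright, hright⟩
  obtain ⟨⟨X, Y⟩, hXY, hmax⟩ := hfin.exists_maximalFor' size pairs ⟨(A, B), h⟩
  refine ⟨X, Y, hXY, fun X' Y' h' =>
    (Prod.Lex.le_iff (x := size (X', Y')) (y := size (X, Y))).1 ?_⟩
  exact (le_total (size (X', Y')) (size (X, Y))).elim id (hmax (j := (X', Y')) h')

/-- The e-transform `(A ⊓ e⁻¹ • B, B ⊔ e • A)` preserves the total dimension, so by maximality it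
cannot enlarge `B`. -/
theorem mul_le_right_of_lexMaximal [FiniteDimensional K C] (h : AdmissiblePair C M Z₀ A B)
    (h1 : 1 ∈ A) (hmax : ∀ A' B', AdmissiblePair C M Z₀ A' B' →
      finrank K A' + finrank K B' = finrank K A + finrank K B → finrank K B' ≤ finrank K B) :
    A * B ≤ B := by
  rw [Submodule.mul_comm, Submodule.mul_le]
  intro e he a ha
  rcases eq_or_ne e 0 with rfl | he0
  · simp
  have := h.finiteDimensional_left
  have := h.finiteDimensional_right
  have htransform : AdmissiblePair C M Z₀ (A ⊓ e⁻¹ • B) (B ⊔ e • A) :=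
    { left_le := inf_le_left.trans h.left_le
      le_right := h.le_right.trans le_sup_left
      left_ne_bot := (Submodule.ne_bot_iff _).2
        ⟨1, ⟨h1, (mem_inv_smul_iff he0).2 (by rwa [mul_one])⟩, one_ne_zero⟩
      not_right_le := fun hle => h.not_right_le (le_sup_left.trans hle)
      mul_le := inf_inv_smul_mul_sup_smul_le he0 h.mul_le h.mul_le }
  have hdim := hmax _ _ htransform (finrank_inf_inv_smul_add_finrank_sup_smul he0)
  rw [eq_of_le_of_finrank_le (le_sup_left : B ≤ B ⊔ e • A) hdim]
  exact mem_sup_right (smul_mem_pointwise_smul a e A ha)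

end AdmissiblePair

/-- An admissible pair `(H, Z)` of maximal total dimension whose left member is a field
stabilizing the right member. -/
structure MaximalFieldPair (C : Submodule K L) (M : IntermediateField K L) (Z₀ : Submodule K L)
    (H : IntermediateField K L) (Z : Submodule K L) : Prop extends AdmissiblePair C M Z₀ H Z where
  stable : H * Z ≤ Z
  finrank_add_le : ∀ ⦃A B⦄, AdmissiblePair C M Z₀ A B →
    finrank K A + finrank K B ≤ finrank K (H : Submodule K L) + finrank K Z

theorem AdmissiblePair.exists_maximalFieldPair [FiniteDimensional K C]
    (h : AdmissiblePair C M Z₀ A B) (hM : M * Z₀ ≤ Z₀) :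
    ∃ H Z, MaximalFieldPair C M Z₀ H Z := by
  obtain ⟨X, Y, hXY, hmax⟩ := h.exists_lexMaximal
  obtain ⟨a, ha, ha0⟩ := exists_mem_ne_zero_of_ne_bot hXY.left_ne_bot
  have hscaled := hXY.smul hM (hXY.left_le ha) ha0
  have h1 : (1 : L) ∈ a⁻¹ • X := (mem_inv_smul_iff ha0).2 (by rwa [mul_one])
  have hX : finrank K ↥(a⁻¹ • X) = finrank K X := finrank_smul (inv_ne_zero ha0) X
  have hY : finrank K ↥(a • Y) = finrank K Y := finrank_smul ha0 Y
  generalize a⁻¹ • X = S, a • Y = Z at *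
  have := hscaled.finiteDimensional_right
  have hSZ : S * Z ≤ Z := hscaled.mul_le_right_of_lexMaximal h1 fun A' B' h' heq => by
    have := hmax A' B' h'
    omega
  let H := M ⊓ mulStabilizer Z
  have hSH : S ≤ H := le_inf hscaled.left_le (le_div_iff_mul_le.2 hSZ)
  have hHZ : H * Z ≤ Z := Submodule.mul_le.2 fun u hu => mem_mulStabilizer.1 hu.2
  have hZC : Z ≤ C := fun z hz => one_mul z ▸ hscaled.mul_le (mul_mem_mul h1 hz)
  have : FiniteDimensional K (H : Submodule K L) :=
    finiteDimensional_left_of_mul_le hHZ hscaled.right_ne_bot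
  refine ⟨H, Z, ⟨⟨fun u hu => hu.1, hscaled.le_right, ?_, hscaled.not_right_le, hHZ.trans hZC⟩,
    hHZ, fun A' B' h' => ?_⟩⟩
  · exact (Submodule.ne_bot_iff _).2 ⟨1, H.one_mem, one_ne_zero⟩
  · have hdim : finrank K S ≤ finrank K (H : Submodule K L) := finrank_mono hSH
    have := hmax A' B' h'
    omega

/-- An admissible pair violating the bound `dim A + dim B ≤ dim C + 1` whose left member is the
largest one possible for `B`. -/
structure CriticalPair (C : Submodule K L) (M : IntermediateField K L)
    (Z₀ A B : Submodule K L) : Prop extends AdmissiblePair C M Z₀ A B where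
  lt_finrank_add : finrank K C + 1 < finrank K A + finrank K B
  inf_div_le : (M : Submodule K L) ⊓ C / B ≤ A

theorem CriticalPair.smul (h : CriticalPair C M Z₀ A B) (hM : M * Z₀ ≤ Z₀) {a : L} (ha : a ∈ M)
    (ha0 : a ≠ 0) : CriticalPair C M Z₀ (a⁻¹ • A) (a • B) where
  toAdmissiblePair := h.toAdmissiblePair.smul hM ha ha0
  lt_finrank_add := by
    rw [finrank_smul (inv_ne_zero ha0), finrank_smul ha0]
    exact h.lt_finrank_add
  inf_div_le x hx := by
    refine (mem_inv_smul_iff ha0).2 (h.inf_div_le ⟨M.mul_mem ha hx.1, fun b hb => ?_⟩)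
    rw [mul_comm a, mul_assoc]
    exact hx.2 _ (smul_mem_pointwise_smul b a B hb)

theorem CriticalPair.maximize_right [FiniteDimensional K C] (h : CriticalPair C M Z₀ A B) :
    CriticalPair C M Z₀ A (C / A) := by
  have hB : B ≤ C / A := Submodule.le_div_iff_mul_le.2 (Submodule.mul_comm A B ▸ h.mul_le)
  have hmul : A * (C / A) ≤ C := by
    rw [Submodule.mul_comm, ← Submodule.le_div_iff_mul_le]
  have := finiteDimensional_right_of_mul_le hmul h.left_ne_bot
  exact
    { left_le := h.left_le
      le_right := h.le_right.trans hB
      left_ne_bot := h.left_ne_bot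
      not_right_le := fun hle => h.not_right_le (hB.trans hle)
      mul_le := hmul
      lt_finrank_add := h.lt_finrank_add.trans_le (Nat.add_le_add_left (finrank_mono hB) _)
      inf_div_le := fun x hx => h.inf_div_le ⟨hx.1, fun b hb => hx.2 b (hB hb)⟩ }

namespace MaximalFieldPair

theorem right_le (h : MaximalFieldPair C M Z₀ H Z) : Z ≤ C :=
  fun z hz => one_mul z ▸ h.mul_le (mul_mem_mul H.one_mem hz)

theorem finrank_add_le_right [FiniteDimensional K C] (h : MaximalFieldPair C M Z₀ H Z)
    (hM : M * Z₀ ≤ Z₀) : finrank K (H : Submodule K L) + finrank K Z₀ ≤ finrank K Z :=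
  have := h.finiteDimensional_right
  finrank_add_finrank_le_of_mul_le h.stable ((mul_le_mul_left h.left_le _).trans hM) h.le_right
    h.not_right_le

/-- The complementary pair `(A ⊓ b⁻¹ • Z, B ⊔ b • H)` is admissible, hence bounded by maximality
of `(H, Z)`, and the two uncrossed pairs together have the total dimension of the original two. -/
theorem criticalPair_inf_sup [FiniteDimensional K C] (h : MaximalFieldPair C M Z₀ H Z)
    (hAB : AdmissiblePair C M Z₀ A B) (hlt : finrank K C + 1 < finrank K A + finrank K B)
    (hdiv : C / A ≤ B) (hAZ : finrank K C < finrank K A + finrank K Z) {b : L} (hb : b ∈ B)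
    (hbZ₀ : b ∉ Z₀) (hbA : ¬ b • A ≤ Z) :
    CriticalPair C H Z (H ⊓ b⁻¹ • B) (Z ⊔ b • A) := by
  have := hAB.finiteDimensional_left
  have := hAB.finiteDimensional_right
  have : FiniteDimensional K (H : Submodule K L) := h.finiteDimensional_left
  have := h.finiteDimensional_right
  have hb0 : b ≠ 0 := fun h => hbZ₀ (h ▸ Z₀.zero_mem)
  have hZbA : finrank K ↥(Z ⊔ b • A) ≤ finrank K C := by
    refine finrank_mono (sup_le h.right_le ((smul_le_mul hb).trans ?_))
    exact Submodule.mul_comm A B ▸ hAB.mul_le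
  have hdimA := finrank_inf_inv_smul_add_finrank_sup_smul (A := A) (Y := Z) hb0
  have hdimH := finrank_inf_inv_smul_add_finrank_sup_smul (A := (H : Submodule K L)) (Y := B) hb0
  have hdim := h.finrank_add_le (A := A ⊓ b⁻¹ • Z) (B := B ⊔ b • (H : Submodule K L))
    { left_le := inf_le_left.trans hAB.left_le
      le_right := hAB.le_right.trans le_sup_left
      left_ne_bot := fun hbot => by
        rw [hbot, finrank_bot] at hdimA
        omega
      not_right_le := fun hle => hAB.not_right_le (le_sup_left.trans hle)
      mul_le := inf_inv_smul_mul_sup_smul_le hb0 hAB.mul_le h.mul_le }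
  exact
    { left_le := inf_le_left
      le_right := le_sup_left
      left_ne_bot := (Submodule.ne_bot_iff _).2
        ⟨1, ⟨H.one_mem, (mem_inv_smul_iff hb0).2 (by rwa [mul_one])⟩, one_ne_zero⟩
      not_right_le := fun hle => hbA (le_sup_right.trans hle)
      mul_le := inf_inv_smul_mul_sup_smul_le hb0 h.mul_le hAB.mul_le
      lt_finrank_add := by omega
      inf_div_le := fun x hx => by
        refine ⟨hx.1, (mem_inv_smul_iff hb0).2 (hdiv fun a ha => ?_)⟩
        rw [mul_right_comm, mul_comm]
        exact hx.2 _ (mem_sup_right (smul_mem_pointwise_smul a b A ha)) }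

theorem mul_right_le [FiniteDimensional K C] (h : MaximalFieldPair C M Z₀ H Z) (hM : M * Z₀ ≤ Z₀)
    (hJH : J ≤ H) (hJ : ∀ ⦃A B⦄, CriticalPair C H Z A B → J * A ≤ A)
    (hAB : AdmissiblePair C M Z₀ A B) (hlt : finrank K C + 1 < finrank K A + finrank K B)
    (hdiv : C / A ≤ B) (hAZ : finrank K C < finrank K A + finrank K Z) :
    J * B ≤ B := by
  refine Submodule.mul_le.2 fun j hj b hb => ?_
  by_cases hbZ₀ : b ∈ Z₀
  · exact hAB.le_right (hM (mul_mem_mul (h.left_le (hJH hj)) hbZ₀))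
  have hb0 : b ≠ 0 := fun h => hbZ₀ (h ▸ Z₀.zero_mem)
  by_cases hbA : b • A ≤ Z
  · refine hdiv fun a ha => ?_
    rw [mul_assoc]
    exact h.mul_le (mul_mem_mul (hJH hj) (smul_le_iff.1 hbA a ha))
  have h1 : (1 : L) ∈ (H : Submodule K L) ⊓ b⁻¹ • B :=
    ⟨H.one_mem, (mem_inv_smul_iff hb0).2 (by rwa [mul_one])⟩
  have hj1 := hJ (h.criticalPair_inf_sup hAB hlt hdiv hAZ hb hbZ₀ hbA) (mul_mem_mul hj h1)
  rw [mul_one] at hj1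
  exact mul_comm b j ▸ (mem_inv_smul_iff hb0).1 hj1.2

theorem mul_left_le_of_lt_finrank [FiniteDimensional K C] (h : MaximalFieldPair C M Z₀ H Z)
    (hM : M * Z₀ ≤ Z₀) (hJH : J ≤ H) (hJ : ∀ ⦃A B⦄, CriticalPair C H Z A B → J * A ≤ A)
    (hAB : CriticalPair C M Z₀ A B) (hAZ : finrank K C < finrank K A + finrank K Z) :
    J * A ≤ A := by
  have hmax := hAB.maximize_right
  have hJB := h.mul_right_le hM hJH hJ hmax.toAdmissiblePair hmax.lt_finrank_add le_rfl hAZ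
  refine Submodule.mul_le.2 fun j hj a ha => hmax.inf_div_le
    ⟨M.mul_mem (h.left_le (hJH hj)) (hAB.left_le ha), fun b hb => ?_⟩
  rw [mul_comm j, mul_assoc]
  exact hmax.mul_le (mul_mem_mul ha (hJB (mul_mem_mul hj hb)))

theorem criticalPair_inf_sup_of_one_mem [FiniteDimensional K C]
    (h : MaximalFieldPair C M Z₀ H Z) (hM : M * Z₀ ≤ Z₀) (hAB : CriticalPair C M Z₀ A B)
    (h1 : 1 ∈ A) (hAZ : finrank K A + finrank K Z ≤ finrank K C) (hBZ : ¬ B ≤ Z) :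
    CriticalPair C H Z (H ⊓ A) (Z ⊔ B) := by
  have := hAB.finiteDimensional_left
  have := hAB.finiteDimensional_right
  have : FiniteDimensional K (H : Submodule K L) := h.finiteDimensional_left
  have := h.finiteDimensional_right
  have := finiteDimensional_of_le h.le_right
  have hBC : B ≤ C := fun b hb => one_mul b ▸ hAB.mul_le (mul_mem_mul h1 hb)
  have hZB : finrank K ↥(Z ⊔ B) ≤ finrank K C := finrank_mono (sup_le h.right_le hBC)
  have hdimB := finrank_sup_add_finrank_inf_eq Z B
  have hdimA := finrank_sup_add_finrank_inf_eq (H : Submodule K L) A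
  have hZ₀ := h.finrank_add_le_right hM
  have hlt := hAB.lt_finrank_add
  have hAB_le := h.finrank_add_le hAB.toAdmissiblePair
  have hdim := h.finrank_add_le (A := H ⊔ A) (B := Z ⊓ B)
    { left_le := sup_le h.left_le hAB.left_le
      le_right := le_inf h.le_right hAB.le_right
      left_ne_bot := fun hbot => hAB.left_ne_bot (le_bot_iff.1 (hbot ▸ le_sup_right))
      not_right_le := fun hle => by
        have := finrank_mono hle
        omega
      mul_le := by
        rw [Submodule.mul_comm]
        refine inf_mul_sup_le ?_ ?_
        · exact Submodule.mul_comm Z H ▸ h.mul_le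
        · exact Submodule.mul_comm B A ▸ hAB.mul_le }
  exact
    { left_le := inf_le_left
      le_right := le_sup_left
      left_ne_bot := (Submodule.ne_bot_iff _).2 ⟨1, ⟨H.one_mem, h1⟩, one_ne_zero⟩
      not_right_le := fun hle => hBZ (le_sup_right.trans hle)
      mul_le := inf_mul_sup_le h.mul_le hAB.mul_le
      lt_finrank_add := by omega
      inf_div_le := fun x hx => ⟨hx.1, hAB.inf_div_le
        ⟨h.left_le hx.1, fun b hb => hx.2 b (mem_sup_right hb)⟩⟩ }

theorem le_left_of_one_mem [FiniteDimensional K C] (h : MaximalFieldPair C M Z₀ H Z)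
    (hM : M * Z₀ ≤ Z₀) (hJH : J ≤ H) (hJ : ∀ ⦃A B⦄, CriticalPair C H Z A B → J * A ≤ A)
    (hAB : CriticalPair C M Z₀ A B) (h1 : 1 ∈ A) (hAZ : finrank K A + finrank K Z ≤ finrank K C) :
    J ≤ A := by
  intro j hj
  by_cases hBZ : B ≤ Z
  · exact hAB.inf_div_le
      ⟨h.left_le (hJH hj), fun b hb => h.mul_le (mul_mem_mul (hJH hj) (hBZ hb))⟩
  have hcrit := h.criticalPair_inf_sup_of_one_mem hM hAB h1 hAZ hBZ
  have hj1 := hJ hcrit (mul_mem_mul hj ⟨H.one_mem, h1⟩)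
  exact mul_one j ▸ hj1.2

theorem mul_left_le_of_finrank_le [FiniteDimensional K C] (h : MaximalFieldPair C M Z₀ H Z)
    (hM : M * Z₀ ≤ Z₀) (hJH : J ≤ H) (hJ : ∀ ⦃A B⦄, CriticalPair C H Z A B → J * A ≤ A)
    (hAB : CriticalPair C M Z₀ A B) (hAZ : finrank K A + finrank K Z ≤ finrank K C) :
    J * A ≤ A := by
  refine Submodule.mul_le.2 fun j hj a ha => ?_
  rcases eq_or_ne a 0 with rfl | ha0
  · simp
  have h1 : (1 : L) ∈ a⁻¹ • A := (mem_inv_smul_iff ha0).2 (by rwa [mul_one])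
  rw [mul_comm, ← mem_inv_smul_iff ha0]
  refine h.le_left_of_one_mem hM hJH hJ (hAB.smul hM (hAB.left_le ha) ha0) h1 ?_ hj
  rwa [finrank_smul (inv_ne_zero ha0)]

theorem left_ne_bot_of_criticalPair [FiniteDimensional K C] (h : MaximalFieldPair C M Z₀ H Z)
    (hAB : CriticalPair C M Z₀ A B) : H ≠ ⊥ := by
  rintro rfl
  have hK : finrank K ((⊥ : IntermediateField K L) : Submodule K L) = 1 :=
    IntermediateField.finrank_bot
  have hle := h.finrank_add_le hAB.toAdmissiblePair
  have hZC := finrank_mono h.right_le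
  have hlt := hAB.lt_finrank_add
  omega

end MaximalFieldPair

theorem CriticalPair.exists_stabilizing_field {C : Submodule K L} [FiniteDimensional K C]
    {M : IntermediateField K L} {Z₀ A B : Submodule K L} (hAB : CriticalPair C M Z₀ A B)
    (hM : M * Z₀ ≤ Z₀) :
    ∃ J ≤ M, J ≠ ⊥ ∧ ∀ ⦃X Y⦄, CriticalPair C M Z₀ X Y → J * X ≤ X := by
  obtain ⟨H, Z, hHZ⟩ := hAB.exists_maximalFieldPair hM
  have hH := hHZ.left_ne_bot_of_criticalPair hAB
  obtain ⟨J, hJH, hJ_ne, hJ⟩ :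
      ∃ J ≤ H, J ≠ ⊥ ∧ ∀ ⦃X Y⦄, CriticalPair C H Z X Y → J * X ≤ X := by
    by_cases hcrit : ∃ X Y, CriticalPair C H Z X Y
    · obtain ⟨X, Y, hXY⟩ := hcrit
      exact hXY.exists_stabilizing_field hHZ.stable
    · exact ⟨H, le_rfl, hH, fun X Y hXY => (hcrit ⟨X, Y, hXY⟩).elim⟩
  refine ⟨J, hJH.trans hHZ.left_le, hJ_ne, fun X Y hXY => ?_⟩
  rcases lt_or_ge (finrank K C) (finrank K X + finrank K Z) with hlt | hge
  · exact hHZ.mul_left_le_of_lt_finrank hM hJH hJ hXY hlt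
  · exact hHZ.mul_left_le_of_finrank_le hM hJH hJ hXY hge
termination_by finrank K C - finrank K Z₀
decreasing_by
  have := hHZ.finiteDimensional_right
  have hZ₀Z : finrank K Z₀ < finrank K Z :=
    finrank_lt_finrank_of_lt (lt_of_le_not_ge hHZ.le_right hHZ.not_right_le)
  have hZC : finrank K Z ≤ finrank K C := finrank_mono hHZ.right_le
  omega

theorem finrank_add_finrank_le_of_mulStabilizer_eq_bot [FiniteDimensional K C] (hC : A * B = C)
    (hA : A ≠ ⊥) (hB : B ≠ ⊥) (hstab : mulStabilizer C = ⊥) :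
    finrank K A + finrank K B ≤ finrank K C + 1 := by
  subst hC
  by_contra! hlt
  have hle : A ≤ (A * B) / B := Submodule.le_div_iff_mul_le.2 le_rfl
  have hmul : (A * B) / B * B ≤ A * B := Submodule.le_div_iff_mul_le.1 le_rfl
  have := finiteDimensional_left_of_mul_le hmul hB
  have hcrit : CriticalPair (A * B) ⊤ ⊥ ((A * B) / B) B :=
    { left_le := fun _ _ => IntermediateField.mem_top (F := K)
      le_right := bot_le
      left_ne_bot := ne_bot_of_le_ne_bot hA hle
      not_right_le := fun h => hB (le_bot_iff.1 h)
      mul_le := hmul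
      lt_finrank_add := hlt.trans_le (Nat.add_le_add_right (finrank_mono hle) _)
      inf_div_le := inf_le_right }
  obtain ⟨J, -, hJ_ne, hJ⟩ := hcrit.exists_stabilizing_field (mul_bot _).le
  have hJ_stab : J * (A * B) ≤ A * B := by
    rw [← mul_assoc]
    refine le_trans ?_ hmul
    exact mul_le_mul_left ((mul_le_mul_right hle _).trans (hJ hcrit)) _
  have hJ_le : J ≤ mulStabilizer (A * B) := Submodule.le_div_iff_mul_le.2 hJ_stab
  exact hJ_ne (le_bot_iff.1 (hstab ▸ hJ_le))

end Pairs

section BaseChange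

instance (F : IntermediateField K L) (X : Submodule K L) [hX : FiniteDimensional K X] :
    FiniteDimensional F (span F (X : Set L)) := by
  obtain ⟨S, hS⟩ := Module.Finite.iff_fg.1 hX
  exact Module.Finite.iff_fg.2 ⟨S, by rw [← hS, span_span_of_tower]⟩

theorem span_coe_mul_span_coe (F : IntermediateField K L) (A B : Submodule K L) :
    span F (A : Set L) * span F (B : Set L) = span F ((A * B : Submodule K L) : Set L) := by
  rw [span_mul_span, Submodule.mul_eq_span_mul_set A B, span_span_of_tower]

theorem finrank_mul_finrank_submodule {F : Type*} [Field F] [Algebra K F] [Algebra F L]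
    [IsScalarTower K F L] (W : Submodule F L) :
    finrank K F * finrank F W = finrank K (W.restrictScalars K) :=
  Module.finrank_mul_finrank K F W

theorem finrank_ceilDiv_le_finrank_span (F : IntermediateField K L) [FiniteDimensional K F]
    (X : Submodule K L) [FiniteDimensional K X] :
    finrank K X ⌈/⌉ finrank K F ≤ finrank F (span F (X : Set L)) := by
  have : FiniteDimensional K (span F (X : Set L)) := Module.Finite.trans F _
  rw [ceilDiv_le_iff_le_smul finrank_pos, smul_eq_mul, finrank_mul_finrank_submodule]
  have : FiniteDimensional K ((span F (X : Set L)).restrictScalars K) := this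
  exact finrank_mono subset_span

variable (C : Submodule K L) [FiniteDimensional K C]

theorem restrictScalars_span_mulStabilizer :
    (span (mulStabilizer C) (C : Set L)).restrictScalars K = C := by
  refine le_antisymm (fun x hx => ?_) subset_span
  induction hx using span_induction with
  | mem _ hx => exact hx
  | zero => exact C.zero_mem
  | add _ _ _ _ hx hy => exact C.add_mem hx hy
  | smul u x _ hx => exact u.2 x hx

theorem finrank_mulStabilizer_mul_finrank_span :
    finrank K (mulStabilizer C) * finrank (mulStabilizer C) (span (mulStabilizer C) (C : Set L)) =
      finrank K C := by
  rw [finrank_mul_finrank_submodule, restrictScalars_span_mulStabilizer]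

theorem mulStabilizer_span_mulStabilizer :
    mulStabilizer (span (mulStabilizer C) (C : Set L)) = ⊥ := by
  refine le_bot_iff.1 fun u hu => IntermediateField.mem_bot.2 ⟨⟨u, fun c hc => ?_⟩, rfl⟩
  exact (restrictScalars_span_mulStabilizer C).le (hu c (subset_span hc))

end BaseChange

theorem finrank_span_add_finrank_span_le {A B : Submodule K L} [FiniteDimensional K ↥(A * B)]
    (hA : A ≠ ⊥) (hB : B ≠ ⊥) :
    finrank (mulStabilizer (A * B)) (span (mulStabilizer (A * B)) (A : Set L)) +
        finrank (mulStabilizer (A * B)) (span (mulStabilizer (A * B)) (B : Set L)) ≤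
      finrank (mulStabilizer (A * B))
        (span (mulStabilizer (A * B)) ((A * B : Submodule K L) : Set L)) + 1 := by
  have span_ne_bot {X : Submodule K L} (hX : X ≠ ⊥) :
      span (mulStabilizer (A * B)) (X : Set L) ≠ ⊥ := fun hbot =>
    hX ((Submodule.eq_bot_iff X).2 (span_eq_bot.1 hbot))
  exact finrank_add_finrank_le_of_mulStabilizer_eq_bot (span_coe_mul_span_coe _ A B)
    (span_ne_bot hA) (span_ne_bot hB) (mulStabilizer_span_mulStabilizer (A * B))

end LinearKneser

theorem stmt_1_general (K L : Type*) [Field K] [Field L] [Algebra K L] (A B : Submodule K L)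
    [hAfin : FiniteDimensional K A] [hBfin : FiniteDimensional K B] (hA : A ≠ ⊥) (hB : B ≠ ⊥) :
    ∃ H : IntermediateField K L, FiniteDimensional K H ∧
      (finrank K A ⌈/⌉ finrank K H + finrank K B ⌈/⌉ finrank K H - 1) * finrank K H ≤
        finrank K ↥(A * B) := by
  have : FiniteDimensional K ↥(A * B) :=
    Module.Finite.iff_fg.2 ((Module.Finite.iff_fg.1 hAfin).mul (Module.Finite.iff_fg.1 hBfin))
  let H := LinearKneser.mulStabilizer (A * B)
  have hH : FiniteDimensional K H :=
    LinearKneser.finiteDimensional_mulStabilizer (A * B) (mul_ne_zero hA hB)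
  have hceilA := LinearKneser.finrank_ceilDiv_le_finrank_span H A
  have hceilB := LinearKneser.finrank_ceilDiv_le_finrank_span H B
  have hkneser := LinearKneser.finrank_span_add_finrank_span_le hA hB
  refine ⟨H, hH, ?_⟩
  rw [← LinearKneser.finrank_mulStabilizer_mul_finrank_span (A * B), mul_comm]
  exact Nat.mul_le_mul_left _ <| Nat.sub_le_of_le_add <|
    (add_le_add hceilA hceilB).trans hkneser

/-- Lower bound part of Theorem 1.1: for a separable extension `K ⊆ L` and nonzero
finite-dimensional subspaces `A, B` with `dim_K A = r`, `dim_K B = s`, there is a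
finite-dimensional intermediate field `H` of degree `h = [H:K]` with
`dim_K ⟨AB⟩ ≥ (⌈r/h⌉ + ⌈s/h⌉ - 1)·h`. -/
theorem stmt_1 (K L : Type*) [Field K] [Field L] [Algebra K L]
    (hsep : ∀ x : L, IsAlgebraic K x → IsSeparable K x)
    (A B : Submodule K L) (hA : A ≠ ⊥) (hB : B ≠ ⊥)
    (hAfin : FiniteDimensional K A) (hBfin : FiniteDimensional K B)
    (r s : ℕ) (hr : Module.finrank K A = r) (hs : Module.finrank K B = s) :
    ∃ H : IntermediateField K L, FiniteDimensional K H ∧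
      Module.finrank K ↥(A * B) ≥
        (r ⌈/⌉ Module.finrank K ↥H + s ⌈/⌉ Module.finrank K ↥H - 1)
          * Module.finrank K ↥H := by
  subst hr hs
  exact stmt_1_general K L A B hA hB
end

section
/- Let H ⊆ L be a commutative field extension which is either algebraic and separable over H, or contains an element transcendental over H. Then for all positive integers r, s with r, s ≤ dim_H L, there exist H-subspaces A, B of L with dim_H A = r, dim_H B = s, and dim_H⟨AB⟩ ≤ r + s − 1. -/
/-!
If `1, x, …, x ^ (m - 1)` are linearly independent with `m = max r s`, then the spans `A` and `B`
of the first `r` and the first `s` powers of `x` do the job: `A * B` is spanned by the first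
`r + s - 1` powers of `x`. Any `x` transcendental over `H` has this property. If `L / H` is
separable, then `m` linearly independent elements of `L` generate a finite separable extension of
degree at least `m`, and a primitive element of it can serve as `x`.
-/

open Module Polynomial

section Semiring

variable (R : Type*) {A : Type*} [CommSemiring R] [Semiring A] [Algebra R A]

/-- The submodule spanned by the first `n` powers `1, x, …, x ^ (n - 1)` of `x`: the linear
analogue of a geometric progression, used as a source of subspaces with a small product. -/
def powSpan (x : A) (n : ℕ) : Submodule R A :=
  Submodule.span R (Set.range fun i : Fin n ↦ x ^ (i : ℕ))

theorem powSpan_mul_powSpan_le (x : A) (m n : ℕ) :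
    powSpan R x m * powSpan R x n ≤ powSpan R x (m + n - 1) := by
  rw [powSpan, powSpan, Submodule.span_mul_span, Submodule.span_le]
  rintro _ ⟨_, ⟨i, rfl⟩, _, ⟨j, rfl⟩, rfl⟩
  exact Submodule.subset_span ⟨⟨i + j, by omega⟩, pow_add x i j⟩

instance finite_powSpan (x : A) (n : ℕ) : Module.Finite R (powSpan R x n) :=
  Module.Finite.span_of_finite R (Set.finite_range _)

end Semiring

section Ring

variable (R : Type*) {A : Type*} [CommRing R] [Nontrivial R] [Ring A] [Algebra R A]

theorem finrank_powSpan_le (x : A) (n : ℕ) : finrank R (powSpan R x n) ≤ n :=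
  (finrank_range_le_card fun i : Fin n ↦ x ^ (i : ℕ)).trans_eq (Fintype.card_fin n)

theorem finrank_powSpan_mul_powSpan_le (x : A) (m n : ℕ) :
    finrank R ↥(powSpan R x m * powSpan R x n) ≤ m + n - 1 :=
  (Submodule.finrank_mono (powSpan_mul_powSpan_le R x m n)).trans (finrank_powSpan_le R x _)

variable {R}

theorem finrank_powSpan_of_le {x : A} {m n : ℕ} (hnm : n ≤ m)
    (hx : LinearIndependent R fun i : Fin m ↦ x ^ (i : ℕ)) : finrank R (powSpan R x n) = n :=
  have hx' : LinearIndependent R fun i : Fin n ↦ x ^ (i : ℕ) :=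
    hx.comp (Fin.castLE hnm) (Fin.castLE_injective hnm)
  (finrank_span_eq_card hx').trans (Fintype.card_fin n)

end Ring

theorem linearIndependent_pow_of_transcendental {R A : Type*} [CommRing R] [Ring A] [Algebra R A]
    {x : A} (hx : Transcendental R x) : LinearIndependent R fun n : ℕ ↦ x ^ n := by
  have h := (basisMonomials R).linearIndependent.map_injOn (aeval x).toLinearMap
    (transcendental_iff_injective.mp hx).injOn
  simpa [Function.comp_def, aeval_monomial] using h

section Separable

variable {F E : Type*} [Field F] [Field E] [Algebra F E] {n : ℕ}

theorem exists_intermediateField_finiteDimensional_le_finrank [Algebra.IsAlgebraic F E]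
    (hn : (n : Cardinal) ≤ Module.rank F E) :
    ∃ K : IntermediateField F E, FiniteDimensional F K ∧ n ≤ finrank F K := by
  obtain ⟨t, ht_card, ht_indep⟩ := exists_finset_linearIndependent_of_le_rank hn
  let K := IntermediateField.adjoin F (t : Set E)
  have hK : FiniteDimensional F K := IntermediateField.finiteDimensional_adjoin
    fun y _ ↦ Algebra.IsIntegral.isIntegral y
  have ht_indep' : LinearIndependent F
      fun y : t ↦ (⟨y, IntermediateField.subset_adjoin F _ y.2⟩ : K) :=
    LinearIndependent.of_comp K.val.toLinearMap ht_indep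
  refine ⟨K, hK, ?_⟩
  simpa [ht_card] using ht_indep'.fintype_card_le_finrank

theorem exists_le_natDegree_minpoly [Algebra.IsSeparable F E]
    (hn : (n : Cardinal) ≤ Module.rank F E) : ∃ x : E, n ≤ (minpoly F x).natDegree := by
  obtain ⟨K, _, hnK⟩ := exists_intermediateField_finiteDimensional_le_finrank hn
  obtain ⟨a, ha⟩ := Field.exists_primitive_element F K
  have hdeg : (minpoly F a).natDegree = finrank F K :=
    (Field.primitive_element_iff_minpoly_natDegree_eq F a).mp ha
  exact ⟨a, by rwa [← K.minpoly_eq a, hdeg]⟩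

theorem exists_linearIndependent_pow
    (hFE : Algebra.IsSeparable F E ∨ ∃ x : E, Transcendental F x)
    (hn : (n : Cardinal) ≤ Module.rank F E) :
    ∃ x : E, LinearIndependent F fun i : Fin n ↦ x ^ (i : ℕ) := by
  rcases hFE with _ | ⟨x, hx⟩
  · obtain ⟨x, hx⟩ := exists_le_natDegree_minpoly hn
    exact ⟨x, (linearIndependent_pow x).comp (Fin.castLE hx) (Fin.castLE_injective hx)⟩
  · exact ⟨x, (linearIndependent_pow_of_transcendental hx).comp _ Fin.val_injective⟩

end Separable

/-- Proposition 4.2: if the extension `H ⊆ L` is algebraic and separable, or contains an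
element transcendental over `H`, then for all positive `r, s ≤ dim_H L` there exist
`H`-subspaces `A, B` of `L` with `dim_H A = r`, `dim_H B = s` and
`dim_H ⟨AB⟩ ≤ r + s - 1`. -/
theorem stmt_7 (H L : Type*) [Field H] [Field L] [Algebra H L]
    (hext : (Algebra.IsAlgebraic H L ∧ Algebra.IsSeparable H L) ∨
      ∃ α : L, Transcendental H α)
    (r s : ℕ) (hr : 0 < r) (hs : 0 < s)
    (hrL : (r : Cardinal) ≤ Module.rank H L) (hsL : (s : Cardinal) ≤ Module.rank H L) :
    ∃ A B : Submodule H L, Module.finrank H A = r ∧ Module.finrank H B = s ∧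
      Module.finrank H ↥(A * B) ≤ r + s - 1 := by
  have hmax : ((max r s : ℕ) : Cardinal) ≤ Module.rank H L :=
    max_rec' (fun n : ℕ ↦ (n : Cardinal) ≤ Module.rank H L) hrL hsL
  obtain ⟨x, hx⟩ := exists_linearIndependent_pow (hext.imp_left And.right) hmax
  exact ⟨powSpan H x r, powSpan H x s, finrank_powSpan_of_le (le_max_left r s) hx,
    finrank_powSpan_of_le (le_max_right r s) hx, finrank_powSpan_mul_powSpan_le H x r s⟩
end
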